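/- arXiv:2007.09504 — 2 statements merged into one kernel-verified Lean document; each statement's English description precedes it below -/
import Mathlib

section
/- For any a, b ∈ ℂ∖{z_1,…,z_n}, the operators D_2(a) and D_2(b) on V commute: D_2(a)∘D_2(b) = D_2(b)∘D_2(a). Moreover, each D_2(a) commutes with the diagonal operators e11 and e22 on V. -/
open Complex Finset

namespace Paper

noncomputable section

variable {n : ℕ}

/-- The index set of the natural basis of `V = V_{m 0} ⊗ ⋯ ⊗ V_{m (n-1)}`:
the basis vector `v_{i_1} ⊗ ⋯ ⊗ v_{i_n}` corresponds to the index `(i_1,…,i_n)`. -/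
abbrev Idx (m : Fin n → ℕ) := ∀ s : Fin n, Fin (m s + 1)

/-- The tensor product `V = V_{m 0} ⊗ ⋯ ⊗ V_{m (n-1)}` realized concretely as the space of
ℂ-valued functions on the index set of its natural basis. -/
abbrev TV (m : Fin n → ℕ) := Idx m → ℂ

/-- The linear operator `f ↦ (i ↦ c i * f (g i))`; all the basic operators below are of
this form. -/
def mulShift {ι : Type*} (c : ι → ℂ) (g : ι → ι) : Module.End ℂ (ι → ℂ) where
  toFun f i := c i * f (g i)
  map_add' f h := by funext i; simp [mul_add]
  map_smul' a f := by
    funext i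
    simp only [Pi.smul_apply, smul_eq_mul, RingHom.id_apply]
    ring

variable (m : Fin n → ℕ)

/-- `e11` acting in the `s`-th tensor factor: `e11 · v_k = ((m-2k)/2) v_k`. -/
def E11 (s : Fin n) : Module.End ℂ (TV m) :=
  mulShift (fun idx => ((m s : ℂ) - 2 * ((idx s : ℕ) : ℂ)) / 2) id

/-- `e22` acting in the `s`-th tensor factor: `e22 · v_k = -((m-2k)/2) v_k`. -/
def E22 (s : Fin n) : Module.End ℂ (TV m) :=
  mulShift (fun idx => -(((m s : ℂ) - 2 * ((idx s : ℕ) : ℂ)) / 2)) id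

/-- `e21` acting in the `s`-th tensor factor: `e21 · v_k = (k+1) v_{k+1}`. -/
def E21 (s : Fin n) : Module.End ℂ (TV m) :=
  mulShift (fun idx => ((idx s : ℕ) : ℂ)) (fun idx => Function.update idx s (idx s - 1))

/-- `e12` acting in the `s`-th tensor factor: `e12 · v_k = (m-k+1) v_{k-1}`. -/
def E12 (s : Fin n) : Module.End ℂ (TV m) :=
  mulShift (fun idx => (m s : ℂ) - ((idx s : ℕ) : ℂ)) (fun idx => Function.update idx s (idx s + 1))

/-- The diagonal action `e11 = Σ_s e11^{(s)}` on the tensor product. -/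
def e11T : Module.End ℂ (TV m) := ∑ s, E11 m s
def e22T : Module.End ℂ (TV m) := ∑ s, E22 m s
def e21T : Module.End ℂ (TV m) := ∑ s, E21 m s
def e12T : Module.End ℂ (TV m) := ∑ s, E12 m s

/-- `v ∈ V[ν]`, i.e. `(e11 - e22) v = ν v`. -/
def inWt (ν : ℤ) (v : TV m) : Prop := (e11T m - e22T m) v = ((ν : ℤ) : ℂ) • v

/-- The Weyl involution `σ`, acting by `σ v_k = (-1)^k v_{m-k}` in each factor. -/
def sigmaOp : Module.End ℂ (TV m) :=
  mulShift (fun idx => ∏ s, (-1 : ℂ) ^ (m s - (idx s : ℕ))) (fun idx s => (idx s).rev)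

/-- The weight of a basis vector: `wt(i) = Σ_s (m_s - 2 i_s)`. -/
def wt (idx : Idx m) : ℤ := ∑ s, ((m s : ℤ) - 2 * ((idx s : ℕ) : ℤ))

/-- The operator `p(κ) = Σ_{k ≥ 0} e21^k e12^k (1/k!) Π_{j=0}^{k-1} (κ + e22 - e11 - j)^{-1}`.
The operator `e22 - e11` is diagonal in the chosen basis with eigenvalue `-wt(idx)` on the
basis vector labelled by `idx`, so the (partial) inverses `(κ + e22 - e11 - j)^{-1}` are the
diagonal operators with entries `(κ - wt(idx) - j)⁻¹`.  The sum is finite on `V` since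
`e12` is nilpotent:  `e12^k = 0` for `k > M = Σ_s m_s`. -/
def pOp (κ : ℂ) : Module.End ℂ (TV m) :=
  ∑ k ∈ Finset.range ((∑ s, m s) + 1),
    (e21T m) ^ k * (e12T m) ^ k *
      mulShift (fun idx => ((k.factorial : ℂ))⁻¹ *
        ∏ j ∈ Finset.range k, (κ - ((wt m idx : ℤ) : ℂ) - (j : ℂ))⁻¹) id

/-- The operator `𝒜(κ) = σ ∘ p(κ)`. -/
def Aop (κ : ℂ) : Module.End ℂ (TV m) := sigmaOp m * pOp m κ

/-- `Ω₀^{(s,t)} = e11^{(s)} e11^{(t)} + e22^{(s)} e22^{(t)}`. -/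
def Om0 (s t : Fin n) : Module.End ℂ (TV m) := E11 m s * E11 m t + E22 m s * E22 m t

/-- `Ω₁₂^{(s,t)} = e12^{(s)} e21^{(t)}`. -/
def Om12 (s t : Fin n) : Module.End ℂ (TV m) := E12 m s * E21 m t

/-- `Ω₂₁^{(s,t)} = e21^{(s)} e12^{(t)}`. -/
def Om21 (s t : Fin n) : Module.End ℂ (TV m) := E21 m s * E12 m t

/-- The trigonometric r-matrix `r^{(s,t)}(x) = (Ω₊ x + Ω₋)/(x-1)` acting in the `s`-th and
`t`-th tensor factors, where `Ω₊ = ½Ω₀ + Ω₁₂` and `Ω₋ = ½Ω₀ + Ω₂₁`. -/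
def rOp (s t : Fin n) (x : ℂ) : Module.End ℂ (TV m) :=
  (x - 1)⁻¹ • (x • ((2 : ℂ)⁻¹ • Om0 m s t + Om12 m s t) + ((2 : ℂ)⁻¹ • Om0 m s t + Om21 m s t))

/-- The trigonometric Gaudin operators
`K_s(z,μ) = (μ/2)(e11-e22)^{(s)} + Σ_{t ≠ s} r^{(s,t)}(z_s/z_t)`. -/
def Kop (z : Fin n → ℂ) (μ : ℂ) (s : Fin n) : Module.End ℂ (TV m) :=
  (μ / 2) • (E11 m s - E22 m s) + ∑ t ∈ Finset.univ.erase s, rOp m s t (z s / z t)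

/-- The matrix entry `M₁₁(x) = 2πi Σ_s (1-x/z_s)⁻¹ e11^{(s)} - πi e11`. -/
def M11 (z : Fin n → ℂ) (x : ℂ) : Module.End ℂ (TV m) :=
  (2 * (Real.pi : ℂ) * I) • (∑ s, (1 - x / z s)⁻¹ • E11 m s) - ((Real.pi : ℂ) * I) • e11T m

/-- `M₁₂(x) = 2πi Σ_s (1-x/z_s)⁻¹ e21^{(s)} - 2πi e21`. -/
def M12 (z : Fin n → ℂ) (x : ℂ) : Module.End ℂ (TV m) :=
  (2 * (Real.pi : ℂ) * I) • (∑ s, (1 - x / z s)⁻¹ • E21 m s) -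
    (2 * (Real.pi : ℂ) * I) • e21T m

/-- `M₂₁(x) = 2πi Σ_s (1-x/z_s)⁻¹ e12^{(s)}`. -/
def M21 (z : Fin n → ℂ) (x : ℂ) : Module.End ℂ (TV m) :=
  (2 * (Real.pi : ℂ) * I) • (∑ s, (1 - x / z s)⁻¹ • E12 m s)

/-- `M₂₂(x) = 2πi Σ_s (1-x/z_s)⁻¹ e22^{(s)} - πi e22`. -/
def M22 (z : Fin n → ℂ) (x : ℂ) : Module.End ℂ (TV m) :=
  (2 * (Real.pi : ℂ) * I) • (∑ s, (1 - x / z s)⁻¹ • E22 m s) - ((Real.pi : ℂ) * I) • e22T m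

/-- The derivative `(dM₂₂/dx)(x) = 2πi Σ_s z_s⁻¹ (1-x/z_s)⁻² e22^{(s)}`. -/
def M22d (z : Fin n → ℂ) (x : ℂ) : Module.End ℂ (TV m) :=
  (2 * (Real.pi : ℂ) * I) • (∑ s, ((z s)⁻¹ * ((1 - x / z s)⁻¹) ^ 2) • E22 m s)

/-- The coefficient `D₂(x)` of the universal differential operator
`𝒟 = cdet [[∂_u - πiμ + M₁₁, M₁₂],[M₂₁, ∂_u + πiμ + M₂₂]] = ∂_u² + D₁(x) ∂_u + D₂(x)`
(where `x = e^{-2πiu}`, `∂_u = -2πi x ∂_x`), namely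
`D₂(x) = (-πiμ + M₁₁(x)) ∘ (πiμ + M₂₂(x)) - 2πi x (dM₂₂/dx)(x) - M₂₁(x) ∘ M₁₂(x)`. -/
def D2 (z : Fin n → ℂ) (μ : ℂ) (x : ℂ) : Module.End ℂ (TV m) :=
  (-(((Real.pi : ℂ) * I * μ)) • (1 : Module.End ℂ (TV m)) + M11 m z x) *
      ((((Real.pi : ℂ) * I * μ)) • (1 : Module.End ℂ (TV m)) + M22 m z x)
    - (2 * (Real.pi : ℂ) * I * x) • M22d m z x
    - M21 m z x * M12 m z x

/-- The Bethe ansatz equations for the triple `(z; μ; V[ν])`, `ν = M - 2m'`:  `t` is a tuple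
of pairwise distinct complex numbers, each nonzero and distinct from every `z_s`, with
`(1 - μ + ν/2)/t_i + Σ_{j≠i} 2/(t_i - t_j) - Σ_s m_s/(t_i - z_s) = 0` for all `i`. -/
def BAE (z : Fin n → ℂ) (μ : ℂ) {m' : ℕ} (t : Fin m' → ℂ) : Prop :=
  Function.Injective t ∧ (∀ i, t i ≠ 0) ∧ (∀ i s, t i ≠ z s) ∧
    ∀ i, (1 - μ + ((∑ s, (m s : ℂ)) - 2 * (m' : ℂ)) / 2) / t i
        + (∑ j ∈ Finset.univ.erase i, 2 / (t i - t j))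
        - ∑ s, (m s : ℂ) / (t i - z s) = 0

/-- The partial sum `ℓ_1 + ⋯ + ℓ_{s-1}` (0-based). -/
def pref (ℓv : Idx m) (s : Fin n) : ℕ :=
  ∑ u ∈ Finset.univ.filter (fun u => u < s), (ℓv u : ℕ)

/-- Extension of a tuple `t : Fin m' → ℂ` to a function on `ℕ` (by zero). -/
def extt {m' : ℕ} (t : Fin m' → ℂ) : ℕ → ℂ := fun i => if h : i < m' then t ⟨i, h⟩ else 0

/-- The coordinate `ω_ℓ(t,z) = Σ_{ρ ∈ S_{m'}} Π_{s=1}^n Π_{i=ℓ_1+⋯+ℓ_{s-1}+1}^{ℓ_1+⋯+ℓ_s}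
(t_{ρ(i)} - z_s)⁻¹` of the weight function. -/
def omegaCoeff (z : Fin n → ℂ) {m' : ℕ} (t : Fin m' → ℂ) (ℓv : Idx m) : ℂ :=
  ∑ ρ : Equiv.Perm (Fin m'), ∏ s : Fin n,
    ∏ i ∈ Finset.Ico (pref m ℓv s) (pref m ℓv s + (ℓv s : ℕ)), (extt (t ∘ ρ) i - z s)⁻¹

/-- The Bethe vector (weight function) `ω(t,z) = Σ_{ℓ ∈ C} ω_ℓ(t,z) v_ℓ ∈ V[M - 2m']`. -/
def betheVec (z : Fin n → ℂ) {m' : ℕ} (t : Fin m' → ℂ) : TV m :=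
  fun ℓv => if (∑ s, ((ℓv s : ℕ))) = m' then omegaCoeff m z t ℓv else 0

/-- The eigenvalue `k_s(t,z,μ) = (m_s/2)[(μ - ν/2 + m_s/2) + Σ_{p≠s} m_p z_s/(z_s-z_p)
+ 2 Σ_i z_s/(t_i - z_s)]`, with `ν = M - 2m'`. -/
def kEig (z : Fin n → ℂ) (μ : ℂ) {m' : ℕ} (t : Fin m' → ℂ) (s : Fin n) : ℂ :=
  ((m s : ℂ) / 2) * ((μ - ((∑ u, (m u : ℂ)) - 2 * (m' : ℂ)) / 2 + (m s : ℂ) / 2)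
    + (∑ p ∈ Finset.univ.erase s, (m p : ℂ) * z s / (z s - z p))
    + 2 * ∑ i, z s / (t i - z s))

/-- The scalar eigenvalue function `E₂(x, t, z, μ)` of `D₂(x)` on the Bethe vector, i.e.
the coefficient of the fundamental differential operator `ℰ = ∂_u² + E₂(x)`. -/
def E2fun (z : Fin n → ℂ) (μ : ℂ) {m' : ℕ} (t : Fin m' → ℂ) (x : ℂ) : ℂ :=
  (2 * (Real.pi : ℂ) * I) ^ 2 *
    (-(μ + ((∑ u, (m u : ℂ)) - 2 * (m' : ℂ)) / 2) ^ 2 / 4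
      + ∑ s, (((m s : ℂ) * ((m s : ℂ) + 2) / 4 + kEig m z μ t s) / (1 - x / z s)
          - ((m s : ℂ) * ((m s : ℂ) + 2) / 4) / (1 - x / z s) ^ 2))




lemma mulShift_apply' {ι : Type*} (c : ι → ℂ) (g : ι → ι) (f : ι → ℂ) (i : ι) :
    mulShift c g f i = c i * f (g i) := rfl

lemma E22_eq (s : Fin n) : E22 m s = - E11 m s := by
  ext f i; simp [E22, E11, mulShift]

lemma rel_hh (s t : Fin n) : E11 m s * E11 m t - E11 m t * E11 m s = if s = t then 0 else 0 := by
  refine LinearMap.ext fun f => funext fun i => ?_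
  simp [E11, mulShift_apply']; ring

lemma fin_succ_val {k : ℕ} (i : Fin (k+1)) (h : (i : ℕ) ≠ k) : ((i + 1 : Fin (k+1)) : ℕ) = i + 1 :=
  Fin.val_add_one_of_lt' (by omega)

lemma fin_pred_val {k : ℕ} (i : Fin (k+1)) (h : (i : ℕ) ≠ 0) : ((i - 1 : Fin (k+1)) : ℕ) = i - 1 :=
  Fin.val_sub_one_of_ne_zero (by intro h'; simp [h'] at h)

lemma rel_he (s t : Fin n) : E11 m s * E12 m t - E12 m t * E11 m s = if s = t then E12 m s else 0 := by
  refine LinearMap.ext fun f => funext fun i => ?_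
  by_cases h : s = t
  · subst h
    by_cases hk : ((i s : Fin _) : ℕ) = m s
    · simp [E11, E12, mulShift_apply', hk]
    · simp [E11, E12, mulShift_apply', fin_succ_val _ hk]; ring
  · simp [E11, E12, mulShift_apply', h]; ring

lemma rel_hf (s t : Fin n) : E11 m s * E21 m t - E21 m t * E11 m s = if s = t then - E21 m s else 0 := by
  refine LinearMap.ext fun f => funext fun i => ?_
  by_cases h : s = t
  · subst h
    by_cases hk : ((i s : Fin _) : ℕ) = 0
    · simp [E11, E21, mulShift_apply', hk]
    · have := fin_pred_val _ hk
      simp [E11, E21, mulShift_apply', this, Nat.cast_sub (Nat.one_le_iff_ne_zero.2 hk)]; ring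
  · simp [E11, E21, mulShift_apply', h]; ring

lemma rel_ee (s t : Fin n) : E12 m s * E12 m t - E12 m t * E12 m s = if s = t then 0 else 0 := by
  refine LinearMap.ext fun f => funext fun i => ?_
  by_cases h : s = t
  · subst h; simp
  · have h' : t ≠ s := fun e => h e.symm
    simp [E12, mulShift_apply', h, h', Function.update_comm h]; ring

lemma rel_ff (s t : Fin n) : E21 m s * E21 m t - E21 m t * E21 m s = if s = t then 0 else 0 := by
  refine LinearMap.ext fun f => funext fun i => ?_
  by_cases h : s = t
  · subst h; simp
  · have h' : t ≠ s := fun e => h e.symm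
    simp [E21, mulShift_apply', h, h', Function.update_comm h]; ring

lemma rel_ef (s t : Fin n) :
    E12 m s * E21 m t - E21 m t * E12 m s = if s = t then (2 : ℂ) • E11 m s else 0 := by
  refine LinearMap.ext fun f => funext fun i => ?_
  by_cases h : s = t
  · subst h
    have h1 : ((m s : ℂ) - (i s : ℕ)) * (((i s + 1 : Fin (m s + 1)) : ℕ) : ℂ)
        = ((m s : ℂ) - (i s : ℕ)) * ((i s : ℕ) + 1) := by
      by_cases hk : ((i s : Fin _) : ℕ) = m s
      · simp [hk]
      · simp [fin_succ_val _ hk]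
    have h2 : ((i s : ℕ) : ℂ) * ((m s : ℂ) - (((i s - 1 : Fin (m s + 1)) : ℕ) : ℂ))
        = ((i s : ℕ) : ℂ) * ((m s : ℂ) - ((i s : ℕ) - 1)) := by
      by_cases hk : ((i s : Fin _) : ℕ) = 0
      · simp [hk]
      · have := fin_pred_val _ hk
        simp [this, Nat.cast_sub (Nat.one_le_iff_ne_zero.2 hk)]
    simp [E12, E21, E11, mulShift_apply', ← mul_assoc, h1, h2]; ring
  · have h' : t ≠ s := fun e => h e.symm
    simp [E12, E21, mulShift_apply', h, h', Function.update_comm h]; ring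

lemma sum_comm_rel {A : Type*} [Ring A] [Algebra ℂ A] (X Y Z : Fin n → A)
    (h : ∀ s t, X s * Y t - Y t * X s = if s = t then Z s else 0) (c d : Fin n → ℂ) :
    (∑ s, c s • X s) * (∑ s, d s • Y s) - (∑ s, d s • Y s) * (∑ s, c s • X s)
      = ∑ s, (c s * d s) • Z s := by
  have h1 : ∀ s t, (c s • X s) * (d t • Y t) - (d t • Y t) * (c s • X s)
      = if s = t then (c s * d s) • Z s else 0 := by
    intro s t
    have := h s t
    rw [smul_mul_smul_comm, smul_mul_smul_comm, mul_comm (d t), ← smul_sub, this]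
    split_ifs with e
    · subst e; rfl
    · simp
  rw [Finset.sum_mul_sum, Finset.sum_mul_sum, Finset.sum_comm (f := fun i j => (d i • Y i) * (c j • X j)),
    ← Finset.sum_sub_distrib]
  simp_rw [← Finset.sum_sub_distrib, h1]
  simp

lemma gaudin_alg {A : Type*} [Ring A] [Algebra ℂ A] (K K' E E' F F' : A) (α : ℂ)
  (kk : K' * K = K * K') (ee : E' * E = E * E') (ff : F' * F = F * F')
  (ke : E' * K = K * E' - ((α + 1/2) • E' - α • E))
  (kf : F' * K = K * F' - (-((α + 1/2) • F') + (α+1) • F))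
  (ek : K' * E = E * K' + ((α+1) • E' - (α + 1/2) • E))
  (fk : K' * F = F * K' - (α • F' - (α + 1/2) • F))
  (ef : F' * E = E * F' - (2 * (α+1)) • (K' - K))
  (fe : E' * F = F * E' + (2 * α) • (K' - K)) :
  (2 • (K * K) + E * F + F * E) * (2 • (K' * K') + E' * F' + F' * E') =
  (2 • (K' * K') + E' * F' + F' * E') * (2 • (K * K) + E * F + F * E) := by
  have kk1 : ∀ x, K' * (K * x) = K * (K' * x) := fun x => by rw [← mul_assoc, kk, mul_assoc]
  have ee1 : ∀ x, E' * (E * x) = E * (E' * x) := fun x => by rw [← mul_assoc, ee, mul_assoc]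
  have ff1 : ∀ x, F' * (F * x) = F * (F' * x) := fun x => by rw [← mul_assoc, ff, mul_assoc]
  have ke1 : ∀ x, E' * (K * x) = (K * E' - ((α + 1/2) • E' - α • E)) * x := fun x => by rw [← mul_assoc, ke]
  have kf1 : ∀ x, F' * (K * x) = (K * F' - (-((α + 1/2) • F') + (α+1) • F)) * x := fun x => by rw [← mul_assoc, kf]
  have ek1 : ∀ x, K' * (E * x) = (E * K' + ((α+1) • E' - (α + 1/2) • E)) * x := fun x => by rw [← mul_assoc, ek]
  have fk1 : ∀ x, K' * (F * x) = (F * K' - (α • F' - (α + 1/2) • F)) * x := fun x => by rw [← mul_assoc, fk]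
  have ef1 : ∀ x, F' * (E * x) = (E * F' - (2 * (α+1)) • (K' - K)) * x := fun x => by rw [← mul_assoc, ef]
  have fe1 : ∀ x, E' * (F * x) = (F * E' + (2 * α) • (K' - K)) * x := fun x => by rw [← mul_assoc, fe]
  simp only [mul_add, add_mul, mul_sub, sub_mul, neg_mul, mul_neg, smul_add, smul_sub, smul_neg, smul_mul_assoc, mul_smul_comm, mul_assoc,
    kk, ee, ff, ke, kf, ek, fk, ef, fe, kk1, ee1, ff1, ke1, kf1, ek1, fk1, ef1, fe1]
  module

section Generic

variable {A : Type*} [Ring A] [Algebra ℂ A]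

/-- Generic version of `D2` in an arbitrary algebra. -/
def gD (h k e f : Fin n → A) (z : Fin n → ℂ) (μ x : ℂ) : A :=
  (-(((Real.pi : ℂ) * I * μ)) • (1 : A) +
      ((2 * (Real.pi : ℂ) * I) • (∑ s, (1 - x / z s)⁻¹ • h s) - ((Real.pi : ℂ) * I) • ∑ s, h s)) *
      ((((Real.pi : ℂ) * I * μ)) • (1 : A) +
      ((2 * (Real.pi : ℂ) * I) • (∑ s, (1 - x / z s)⁻¹ • k s) - ((Real.pi : ℂ) * I) • ∑ s, k s))
    - (2 * (Real.pi : ℂ) * I * x) •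
      ((2 * (Real.pi : ℂ) * I) • (∑ s, ((z s)⁻¹ * ((1 - x / z s)⁻¹) ^ 2) • k s))
    - ((2 * (Real.pi : ℂ) * I) • (∑ s, (1 - x / z s)⁻¹ • e s)) *
      ((2 * (Real.pi : ℂ) * I) • (∑ s, (1 - x / z s)⁻¹ • f s) -
    (2 * (Real.pi : ℂ) * I) • ∑ s, f s)

def cf (z : Fin n → ℂ) (x : ℂ) (s : Fin n) : ℂ := (1 - x / z s)⁻¹
def HH (h : Fin n → A) (z : Fin n → ℂ) (x : ℂ) : A := ∑ s, (cf z x s - 1/2) • h s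
def EE (e : Fin n → A) (z : Fin n → ℂ) (x : ℂ) : A := ∑ s, cf z x s • e s
def FF (f : Fin n → A) (z : Fin n → ℂ) (x : ℂ) : A := ∑ s, (cf z x s - 1) • f s
def KK (h : Fin n → A) (z : Fin n → ℂ) (μ x : ℂ) : A := HH h z x - (μ / 2) • 1

lemma M11_eq (h : Fin n → A) (z : Fin n → ℂ) (x : ℂ) :
    (2 * (Real.pi : ℂ) * I) • (∑ s, (1 - x / z s)⁻¹ • h s) - ((Real.pi : ℂ) * I) • ∑ s, h s
      = (2 * (Real.pi : ℂ) * I) • HH h z x := by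
  simp only [HH, sub_smul, Finset.sum_sub_distrib, ← Finset.smul_sum, cf]
  module

lemma M12_eq (f : Fin n → A) (z : Fin n → ℂ) (x : ℂ) :
    (2 * (Real.pi : ℂ) * I) • (∑ s, (1 - x / z s)⁻¹ • f s) - (2 * (Real.pi : ℂ) * I) • ∑ s, f s
      = (2 * (Real.pi : ℂ) * I) • FF f z x := by
  simp only [FF, sub_smul, Finset.sum_sub_distrib, ← Finset.smul_sum, cf]
  module

lemma HH_neg (h : Fin n → A) (z : Fin n → ℂ) (x : ℂ) : HH (fun s => - h s) z x = - HH h z x := by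
  simp [HH]

lemma EF_same (h e f : Fin n → A)
    (rel_ef : ∀ s t, e s * f t - f t * e s = if s = t then (2 : ℂ) • h s else 0)
    (z : Fin n → ℂ) (x : ℂ) : EE e z x * FF f z x - FF f z x * EE e z x =
    (2 : ℂ) • ∑ s, (cf z x s * (cf z x s - 1)) • h s := by
  rw [EE, FF, sum_comm_rel _ _ _ rel_ef, Finset.smul_sum]
  refine Finset.sum_congr rfl fun s _ => ?_
  module

lemma M22d_eq (h : Fin n → A) (z : Fin n → ℂ) (x : ℂ) (hz0 : ∀ s, z s ≠ 0) (hx : ∀ s, x ≠ z s) :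
    x • ((2 * (Real.pi : ℂ) * I) • (∑ s, ((z s)⁻¹ * ((1 - x / z s)⁻¹) ^ 2) • (- h s)))
      = -((2 * (Real.pi : ℂ) * I) • ∑ s, (cf z x s * (cf z x s - 1)) • h s) := by
  rw [smul_comm, Finset.smul_sum, ← smul_neg, ← Finset.sum_neg_distrib]
  congr 1
  refine Finset.sum_congr rfl fun s _ => ?_
  rw [smul_neg, smul_neg, smul_smul]
  congr 2
  have h0 := hz0 s
  have h1 : 1 - x / z s ≠ 0 := by
    rw [sub_ne_zero]; intro h; apply hx s; field_simp at h; exact h.symm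
  have h2 : x = z s * (1 - (1 - x / z s)) := by field_simp; ring
  unfold cf
  generalize 1 - x / z s = w at *
  rw [h2]; field_simp

lemma D2_eq (h e f : Fin n → A)
    (rel_ef : ∀ s t, e s * f t - f t * e s = if s = t then (2 : ℂ) • h s else 0)
    (z : Fin n → ℂ) (μ x : ℂ) (hz0 : ∀ s, z s ≠ 0) (hx : ∀ s, x ≠ z s) :
    gD h (fun s => - h s) e f z μ x = (-(2 * (Real.pi : ℂ) * I)^2 / 2) •
      (2 • (KK h z μ x * KK h z μ x) + EE e z x * FF f z x + FF f z x * EE e z x) := by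
  have hef := EF_same h e f rel_ef z x
  have hf : FF f z x * EE e z x = EE e z x * FF f z x -
    (2 : ℂ) • ∑ s, (cf z x s * (cf z x s - 1)) • h s := by rw [← hef]; abel
  have h21 : (2 * (Real.pi : ℂ) * I) • (∑ s, (1 - x / z s)⁻¹ • e s)
    = (2 * (Real.pi : ℂ) * I) • EE e z x := rfl
  rw [gD, M11_eq, M11_eq, HH_neg, M12_eq, h21, mul_smul _ x, M22d_eq h z x hz0 hx, hf, KK]
  simp only [mul_add, add_mul, mul_sub, sub_mul, neg_mul, mul_neg, smul_mul_assoc, mul_smul_comm,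
    one_mul, mul_one, smul_neg]
  module

lemma cf_sub (z : Fin n → ℂ) (a b : ℂ) (s : Fin n) (hab : a ≠ b) (hz0 : z s ≠ 0) (ha : a ≠ z s)
    (hb : b ≠ z s) :
    cf z a s * cf z b s = cf z b s + a / (b - a) * (cf z b s - cf z a s) := by
  have h1 : z s - a ≠ 0 := sub_ne_zero.2 ha.symm
  have h2 : z s - b ≠ 0 := sub_ne_zero.2 hb.symm
  have h3 : b - a ≠ 0 := sub_ne_zero.2 hab.symm
  have e1 : cf z a s = z s / (z s - a) := by
    rw [cf, one_sub_div hz0, inv_div]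
  have e2 : cf z b s = z s / (z s - b) := by
    rw [cf, one_sub_div hz0, inv_div]
  rw [e1, e2]; field_simp; ring

lemma comb2 {A : Type*} [Ring A] [Algebra ℂ A] (X : Fin n → A) (c d e : Fin n → ℂ) (p q : ℂ)
    (h : ∀ s, c s = p * d s + q * e s) :
    ∑ s, c s • X s = p • (∑ s, d s • X s) + q • ∑ s, e s • X s := by
  simp only [h, add_smul, Finset.sum_add_distrib, Finset.smul_sum, smul_smul]

theorem gD_comm (h e f : Fin n → A)
    (rel_hh : ∀ s t, h s * h t - h t * h s = if s = t then (0 : A) else 0)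
    (rel_he : ∀ s t, h s * e t - e t * h s = if s = t then e s else 0)
    (rel_hf : ∀ s t, h s * f t - f t * h s = if s = t then - f s else 0)
    (rel_ee : ∀ s t, e s * e t - e t * e s = if s = t then (0 : A) else 0)
    (rel_ff : ∀ s t, f s * f t - f t * f s = if s = t then (0 : A) else 0)
    (rel_ef : ∀ s t, e s * f t - f t * e s = if s = t then (2 : ℂ) • h s else 0)
    (z : Fin n → ℂ) (hz0 : ∀ s, z s ≠ 0)
    (μ : ℂ) (a b : ℂ) (ha : ∀ s, a ≠ z s) (hb : ∀ s, b ≠ z s) :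
    gD h (fun s => - h s) e f z μ a * gD h (fun s => - h s) e f z μ b = gD h (fun s => - h s) e f z μ b * gD h (fun s => - h s) e f z μ a := by
  by_cases hab : a = b
  · rw [hab]
  have hc := fun s => cf_sub z a b s hab (hz0 s) (ha s) (hb s)
  rw [D2_eq h e f rel_ef z μ a hz0 ha, D2_eq h e f rel_ef z μ b hz0 hb, smul_mul_smul_comm, smul_mul_smul_comm]
  congr 1
  have hKK : KK h z μ b - KK h z μ a = HH h z b - HH h z a := by simp [KK]
  have hHH : HH h z b - HH h z a = ∑ s, (cf z b s - cf z a s) • h s := by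
    rw [HH, HH, ← Finset.sum_sub_distrib]
    refine Finset.sum_congr rfl fun s _ => ?_
    module
  have cK : ∀ x (Y R : A), HH h z x * Y - Y * HH h z x = R →
      KK h z μ x * Y - Y * KK h z μ x = R := by
    intro x Y R h
    rw [← h, KK]; simp [sub_mul, mul_sub]
  have neg2 : ∀ (X : Fin n → A) (c : Fin n → ℂ), ∑ s, c s • (- X s) =
      - ∑ s, c s • X s := by intro X c; simp
  apply gaudin_alg _ _ _ _ _ _ (a / (b - a))
  · have := cK a (HH h z b) 0 (by rw [HH, HH, sum_comm_rel _ _ (fun _ => 0) rel_hh]; simp)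
    simp only [KK, mul_sub, sub_mul, smul_mul_assoc, mul_smul_comm, one_mul, mul_one] at this ⊢
    rw [← sub_eq_zero, ← neg_eq_zero, ← this]; module
  · have := sum_comm_rel _ _ (fun _ => 0) rel_ee (cf z a) (cf z b)
    simp only [smul_zero, Finset.sum_const_zero] at this
    exact (sub_eq_zero.1 this).symm
  · have := sum_comm_rel _ _ (fun _ => 0) rel_ff (fun s => cf z a s - 1) (fun s => cf z b s - 1)
    simp only [smul_zero, Finset.sum_const_zero] at this
    exact (sub_eq_zero.1 this).symm
  · have := cK a _ _ (sum_comm_rel _ _ _ rel_he (fun s => cf z a s - 1/2) (cf z b))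
    rw [comb2 _ (fun s => (cf z a s - 1/2) * cf z b s) (cf z b) (cf z a) (a / (b - a) + 1/2) (-(a / (b - a)))
      (fun s => by linear_combination hc s)] at this
    simp only [EE]
    rw [eq_sub_iff_add_eq, ← eq_sub_iff_add_eq', this]
    module
  · have := cK a _ _ (sum_comm_rel _ _ _ rel_hf (fun s => cf z a s - 1/2) (fun s => cf z b s - 1))
    rw [neg2, comb2 _ (fun s => (cf z a s - 1/2) * (cf z b s - 1)) (fun s => cf z b s - 1) (fun s => cf z a s - 1) (a / (b - a) + 1/2)
      (-(a / (b - a)+1)) (fun s => by linear_combination hc s)] at this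
    simp only [FF]
    rw [eq_sub_iff_add_eq, ← eq_sub_iff_add_eq', this]
    module
  · have := cK b _ _ (sum_comm_rel _ _ _ rel_he (fun s => cf z b s - 1/2) (cf z a))
    rw [comb2 _ (fun s => (cf z b s - 1/2) * cf z a s) (cf z b) (cf z a) (a / (b - a) + 1) (-(a / (b - a) + 1/2))
      (fun s => by linear_combination hc s)] at this
    simp only [EE]
    rw [← sub_eq_iff_eq_add', this]
    module
  · have := cK b _ _ (sum_comm_rel _ _ _ rel_hf (fun s => cf z b s - 1/2) (fun s => cf z a s - 1))
    rw [neg2, comb2 _ (fun s => (cf z b s - 1/2) * (cf z a s - 1)) (fun s => cf z b s - 1) (fun s => cf z a s - 1) (a / (b - a))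
      (-(a / (b - a)+1/2)) (fun s => by linear_combination hc s)] at this
    simp only [FF]
    rw [sub_eq_add_neg, ← sub_eq_iff_eq_add', this]
    module
  · have := sum_comm_rel _ _ _ rel_ef (cf z a) (fun s => cf z b s - 1)
    rw [hKK, hHH]
    simp only [EE, FF]
    rw [eq_sub_iff_add_eq, ← eq_sub_iff_add_eq', this, Finset.smul_sum]
    refine Finset.sum_congr rfl fun s _ => ?_
    rw [smul_smul, smul_smul]
    congr 1
    linear_combination (-2) * hc s
  · have := sum_comm_rel _ _ _ rel_ef (cf z b) (fun s => cf z a s - 1)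
    rw [hKK, hHH]
    simp only [EE, FF]
    rw [← sub_eq_iff_eq_add', this, Finset.smul_sum]
    refine Finset.sum_congr rfl fun s _ => ?_
    rw [smul_smul, smul_smul]
    congr 1
    linear_combination 2 * hc s

theorem gD_e11 (h e f : Fin n → A)
    (rel_hh : ∀ s t, h s * h t - h t * h s = if s = t then (0 : A) else 0)
    (rel_he : ∀ s t, h s * e t - e t * h s = if s = t then e s else 0)
    (rel_hf : ∀ s t, h s * f t - f t * h s = if s = t then - f s else 0)
    (rel_ee : ∀ s t, e s * e t - e t * e s = if s = t then (0 : A) else 0)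
    (rel_ff : ∀ s t, f s * f t - f t * f s = if s = t then (0 : A) else 0)
    (rel_ef : ∀ s t, e s * f t - f t * e s = if s = t then (2 : ℂ) • h s else 0)
    (z : Fin n → ℂ) (hz0 : ∀ s, z s ≠ 0) (μ : ℂ) (a : ℂ) (ha : ∀ s, a ≠ z s) :
    gD h (fun s => - h s) e f z μ a * (∑ s, h s) = (∑ s, h s) * gD h (fun s => - h s) e f z μ a := by
  have e1 : (∑ s, h s) = ∑ s, (fun _ => (1 : ℂ)) s • h s := by simp [e11T]
  have hH : (∑ s, h s) * HH h z a - HH h z a * (∑ s, h s) = 0 := by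
    rw [e1, HH, sum_comm_rel _ _ (fun _ => 0) rel_hh]; simp
  have hE : (∑ s, h s) * EE e z a - EE e z a * (∑ s, h s) = EE e z a := by
    rw [e1, EE, sum_comm_rel _ _ _ rel_he]; simp
  have hF : (∑ s, h s) * FF f z a - FF f z a * (∑ s, h s) = - FF f z a := by
    rw [e1, FF, sum_comm_rel _ _ _ rel_hf]; simp
  have cH : Commute ((∑ s, h s)) (HH h z a) := sub_eq_zero.1 hH
  have cKc : Commute ((∑ s, h s)) (KK h z μ a) :=
    cH.sub_right ((Commute.one_right _).smul_right _)
  have cEF : Commute ((∑ s, h s)) (EE e z a * FF f z a) := by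
    rw [sub_eq_iff_eq_add] at hE hF
    unfold Commute SemiconjBy
    rw [← mul_assoc, hE, add_mul, mul_assoc, hF, mul_add, ← mul_assoc]; simp
  have cFE : Commute ((∑ s, h s)) (FF f z a * EE e z a) := by
    rw [sub_eq_iff_eq_add] at hE hF
    unfold Commute SemiconjBy
    rw [← mul_assoc, hF, add_mul, mul_assoc, mul_assoc, hE, mul_add]; simp [mul_assoc]
  rw [D2_eq h e f rel_ef z μ a hz0 ha]
  exact (((((cKc.mul_right cKc).smul_right 2).add_right cEF).add_right cFE).smul_right _).symm.eq

end Generic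

theorem D2_comm' (z : Fin n → ℂ) (hz0 : ∀ s, z s ≠ 0)
    (μ : ℂ) (a b : ℂ) (ha : ∀ s, a ≠ z s) (hb : ∀ s, b ≠ z s) :
    D2 m z μ a * D2 m z μ b = D2 m z μ b * D2 m z μ a := by
  have h22 : E22 m = fun s => - E11 m s := funext (E22_eq m)
  have h := gD_comm (E11 m) (E12 m) (E21 m) (rel_hh m) (rel_he m) (rel_hf m) (rel_ee m) (rel_ff m)
    (rel_ef m) z hz0 μ a b ha hb
  rw [← h22] at h
  exact h

theorem D2_e11' (z : Fin n → ℂ) (hz0 : ∀ s, z s ≠ 0) (μ : ℂ) (a : ℂ) (ha : ∀ s, a ≠ z s) :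
    D2 m z μ a * e11T m = e11T m * D2 m z μ a := by
  have h22 : E22 m = fun s => - E11 m s := funext (E22_eq m)
  have h := gD_e11 (E11 m) (E12 m) (E21 m) (rel_hh m) (rel_he m) (rel_hf m) (rel_ee m) (rel_ff m)
    (rel_ef m) z hz0 μ a ha
  rw [← h22] at h
  exact h

lemma comm_neg_aux {A : Type*} [Ring A] (x y : A) (h : x * y = y * x) : x * (-y) = (-y) * x := by
  rw [mul_neg, neg_mul, h]

/-- Lemma 4.2 of the paper.  For any `a, b ∈ ℂ∖{z_1,…,z_n}` the operators
`D₂(a)` and `D₂(b)` on `V` commute; moreover each `D₂(a)` commutes with the diagonal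
operators `e11` and `e22` on `V`. -/
theorem statement2
    (n : ℕ) (hn : 1 < n) (m : Fin n → ℕ) (hm : ∀ s, 0 < m s)
    (z : Fin n → ℂ) (hz0 : ∀ s, z s ≠ 0) (hz : Function.Injective z)
    (μ : ℂ) (a b : ℂ) (ha : ∀ s, a ≠ z s) (hb : ∀ s, b ≠ z s) :
    D2 m z μ a * D2 m z μ b = D2 m z μ b * D2 m z μ a ∧
    D2 m z μ a * e11T m = e11T m * D2 m z μ a ∧
    D2 m z μ a * e22T m = e22T m * D2 m z μ a := by
  have h1 := D2_e11' m z hz0 μ a ha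
  refine ⟨D2_comm' m z hz0 μ a b ha hb, h1, ?_⟩
  have h2 : e22T m = - e11T m := by simp [e22T, e11T, E22_eq]
  rw [h2]
  exact comm_neg_aux _ _ h1


end
end Paper
end

section
/- Let t⁰ = (t⁰_1,…,t⁰_m) be a solution of the Bethe ansatz equations for the triple (z; μ; V[ν]), where ν = M − 2m. Then for every s = 1,…,n the Bethe vector is an eigenvector of the trigonometric Gaudin operator: K_s(z,μ)·ω(t⁰,z) = k_s(t⁰,z,μ)·ω(t⁰,z), where k_s(t⁰,z,μ) = (m_s/2)·[(μ − ν/2 + m_s/2) + Σ_{p≠s} m_p·z_s/(z_s − z_p) + 2·Σ_{i=1}^m z_s/(t⁰_i − z_s)]. -/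
open Complex Finset

namespace Paper

noncomputable section

variable {n : ℕ}

variable (m : Fin n → ℕ)

/-- The weight of a colouring `g` of the points `τ`. -/
def Fw {n k : ℕ} (z : Fin n → ℂ) (τ : Fin k → ℂ) (g : Fin k → Fin n) : ℂ :=
  ∏ i, (τ i - z (g i))⁻¹

/-- Symmetrization of `Fw`. -/
def Phi {n k : ℕ} (z : Fin n → ℂ) (t : Fin k → ℂ) (g : Fin k → Fin n) : ℂ :=
  ∑ ρ : Equiv.Perm (Fin k), Fw z (t ∘ ρ) g

/-- Number of points of colour `p`. -/
def cnt {n k : ℕ} (g : Fin k → Fin n) (p : Fin n) : ℕ := #{i | g i = p}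

theorem sum_cnt {n k : ℕ} (g : Fin k → Fin n) : ∑ p, cnt g p = k := by
  unfold cnt
  have := Finset.card_eq_sum_card_fiberwise (f := g) (s := Finset.univ) (t := Finset.univ)
    (by intro x _; simp)
  simpa using this.symm

theorem cnt_update {n k : ℕ} (g : Fin k → Fin n) (i : Fin k) (a q : Fin n) :
    cnt (Function.update g i a) q + (if q = g i then 1 else 0)
      = cnt g q + (if q = a then 1 else 0) := by
  unfold cnt
  simp only [Finset.card_filter]
  rw [← Finset.add_sum_erase _ _ (Finset.mem_univ i),
    ← Finset.add_sum_erase (a := i) _ (fun j => if g j = q then 1 else 0) (Finset.mem_univ i)]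
  have : ∑ x ∈ Finset.univ.erase i, (if Function.update g i a x = q then 1 else 0)
      = ∑ x ∈ Finset.univ.erase i, (if g x = q then 1 else 0) := by
    apply Finset.sum_congr rfl
    intro x hx
    rw [Function.update_of_ne (Finset.ne_of_mem_erase hx)]
  rw [this]
  simp only [Function.update_self, eq_comm (a := q)]
  ring

theorem exists_cnt {n k : ℕ} (l : Fin n → ℕ) (h : ∑ s, l s = k) :
    ∃ g : Fin k → Fin n, ∀ p, cnt g p = l p := by
  subst h
  refine ⟨fun i => (finSigmaFinEquiv.symm i).1, fun p => ?_⟩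
  unfold cnt
  rw [← Fintype.card_subtype]
  have e1 : {i // (finSigmaFinEquiv (n := l).symm i).1 = p} ≃ {x : (s : Fin n) × Fin (l s) // x.1 = p} :=
    (finSigmaFinEquiv (n := l)).symm.subtypeEquiv (fun a => Iff.rfl)
  rw [Fintype.card_congr (e1.trans (Equiv.sigmaSubtype p))]
  simp

theorem omega_eq_Phi {n : ℕ} (m : Fin n → ℕ) (z : Fin n → ℂ) {k : ℕ} (t : Fin k → ℂ) (l : Idx m)
    (g : Fin k → Fin n) (hg : ∀ p, cnt g p = l p) : omegaCoeff m z t l = Phi z t g := by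
  have hs : ∑ s, (l s : ℕ) = k := by
    rw [← sum_cnt g]; exact Finset.sum_congr rfl (fun p _ => (hg p).symm)
  let e1 : (Σ s, {i // g i = s}) ≃ (Σ s, Fin (l s : ℕ)) :=
    Equiv.sigmaCongrRight (fun s => Fintype.equivFinOfCardEq (by
      rw [← hg s, Fintype.card_subtype]; rfl))
  let e2 : (Σ s, Fin (l s : ℕ)) ≃ Fin k := finSigmaFinEquiv.trans (finCongr hs)
  let π : Equiv.Perm (Fin k) := ((Equiv.sigmaFiberEquiv g).symm.trans e1).trans e2
  have he2 : ∀ x : Σ s, Fin (l s : ℕ), (e2 x : ℕ) = pref m l x.1 + x.2 := by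
    intro x
    simp only [e2, Equiv.trans_apply, finCongr_apply, Fin.val_cast, finSigmaFinEquiv_apply, pref]
    congr 1
    have : (Finset.univ.filter (fun u : Fin n => u < x.1)) =
      (Finset.univ : Finset (Fin x.1)).map (Fin.castLEEmb x.1.2.le) := by
      ext u
      simp only [Finset.mem_filter, Finset.mem_univ, true_and, Finset.mem_map, Fin.castLEEmb_apply]
      constructor
      · intro hu; exact ⟨⟨u, hu⟩, rfl⟩
      · rintro ⟨a, rfl⟩; exact a.2
    rw [this, Finset.sum_map]
    rfl
  unfold omegaCoeff Phi
  refine Eq.trans ?_ (Equiv.sum_comp (Equiv.mulRight π)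
    (fun ρ : Equiv.Perm (Fin k) => Fw z (t ∘ ρ) g))
  apply Finset.sum_congr rfl
  intro ρ _
  simp only [Equiv.coe_mulRight, Equiv.Perm.coe_mul, Fw]
  have hA : ∀ s : Fin n, ∏ i ∈ Finset.Ico (pref m l s) (pref m l s + (l s : ℕ)),
      (extt (t ∘ ρ) i - z s)⁻¹ = ∏ x : Fin (l s : ℕ), (t (ρ (e2 ⟨s, x⟩)) - z s)⁻¹ := by
    intro s
    rw [Finset.prod_Ico_eq_prod_range, Nat.add_sub_cancel_left, Finset.prod_range]
    apply Finset.prod_congr rfl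
    intro x _
    have h1 := he2 ⟨s, x⟩
    have h2 : pref m l s + (x : ℕ) < k := by
      have := (e2 ⟨s, x⟩).2
      rw [h1] at this
      exact this
    have h3 : (⟨pref m l s + (x : ℕ), h2⟩ : Fin k) = e2 ⟨s, x⟩ := Fin.ext h1.symm
    rw [extt, dif_pos h2, Function.comp_apply, h3]
  rw [Finset.prod_congr rfl (fun s _ => hA s)]
  rw [← Fintype.prod_sigma (fun x : Σ s, Fin (l s : ℕ) => (t (ρ (e2 x)) - z x.1)⁻¹)]
  rw [← Equiv.prod_comp ((Equiv.sigmaFiberEquiv g).symm.trans e1)]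
  rfl

theorem Fw_update {n k : ℕ} (z : Fin n → ℂ) (τ : Fin k → ℂ) (g : Fin k → Fin n)
    (h : ∀ i s, τ i ≠ z s) (i : Fin k) (a : Fin n) :
    Fw z τ (Function.update g i a) = Fw z τ g * ((τ i - z (g i)) / (τ i - z a)) := by
  unfold Fw
  rw [← Finset.mul_prod_erase _ _ (Finset.mem_univ i),
    ← Finset.mul_prod_erase (a := i) _ (fun j => (τ j - z (g j))⁻¹) (Finset.mem_univ i)]
  have : ∏ x ∈ Finset.univ.erase i, (τ x - z (Function.update g i a x))⁻¹
      = ∏ x ∈ Finset.univ.erase i, (τ x - z (g x))⁻¹ := by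
    apply Finset.prod_congr rfl
    intro x hx
    rw [Function.update_of_ne (Finset.ne_of_mem_erase hx)]
  rw [this, Function.update_self]
  have h1 := sub_ne_zero.2 (h i a)
  have h2 := sub_ne_zero.2 (h i (g i))
  field_simp

/-- The pair term. -/
def Pij {n k : ℕ} (z : Fin n → ℂ) (τ : Fin k → ℂ) (s p : Fin n) (i j : Fin k) : ℂ :=
  -(z s / (τ j - z s)) + z p / (τ i - z p) - 2 * τ i / (τ i - τ j) + 1

theorem pair_anti {n k : ℕ} (z : Fin n → ℂ) (τ : Fin k → ℂ) (g : Fin k → Fin n)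
    (h : ∀ i s, τ i ≠ z s) (hi : Function.Injective τ) (i j : Fin k) (hij : i ≠ j) :
    Fw z τ g * Pij z τ (g i) (g j) i j
     + Fw z (τ ∘ Equiv.swap i j) g * Pij z (τ ∘ Equiv.swap i j) (g i) (g j) i j = 0 := by
  unfold Fw Pij
  have hj : j ∈ Finset.univ.erase i := by simp [hij.symm]
  rw [← Finset.mul_prod_erase _ _ (Finset.mem_univ i), ← Finset.mul_prod_erase _ _ hj,
    ← Finset.mul_prod_erase (a := i) _ (fun x => ((τ ∘ Equiv.swap i j) x - z (g x))⁻¹)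
      (Finset.mem_univ i),
    ← Finset.mul_prod_erase _ (fun x => ((τ ∘ Equiv.swap i j) x - z (g x))⁻¹) hj]
  have : ∏ x ∈ (Finset.univ.erase i).erase j, ((τ ∘ Equiv.swap i j) x - z (g x))⁻¹
      = ∏ x ∈ (Finset.univ.erase i).erase j, (τ x - z (g x))⁻¹ := by
    apply Finset.prod_congr rfl
    intro x hx
    simp only [Finset.mem_erase] at hx
    rw [Function.comp_apply, Equiv.swap_apply_of_ne_of_ne hx.2.1 hx.1]
  rw [this]
  simp only [Function.comp_apply, Equiv.swap_apply_left, Equiv.swap_apply_right]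
  have h1 := sub_ne_zero.2 (h i (g i))
  have h2 := sub_ne_zero.2 (h i (g j))
  have h3 := sub_ne_zero.2 (h j (g i))
  have h4 := sub_ne_zero.2 (h j (g j))
  have h5 : τ i - τ j ≠ 0 := sub_ne_zero.2 (fun e => hij (hi e))
  have h6 : τ j - τ i ≠ 0 := sub_ne_zero.2 (fun e => hij (hi e).symm)
  generalize ∏ x ∈ (Finset.univ.erase i).erase j, (τ x - z (g x))⁻¹ = R
  generalize τ i = a at *
  generalize τ j = b at *
  generalize z (g i) = u at *
  generalize z (g j) = v at *
  have h7 : 2 * b / (b - a) = - (2 * b / (a - b)) := by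
    rw [← neg_sub a b, div_neg]
  rw [h7]
  field_simp
  ring

theorem pair_sum {n k : ℕ} (z : Fin n → ℂ) (t : Fin k → ℂ) (g : Fin k → Fin n)
    (h : ∀ i s, t i ≠ z s) (hi : Function.Injective t) (i j : Fin k) (hij : i ≠ j) :
    ∑ ρ : Equiv.Perm (Fin k), Fw z (t ∘ ρ) g * Pij z (t ∘ ρ) (g i) (g j) i j = 0 := by
  have e := Equiv.sum_comp (Equiv.mulRight (Equiv.swap i j))
    (fun ρ : Equiv.Perm (Fin k) => Fw z (t ∘ ρ) g * Pij z (t ∘ ρ) (g i) (g j) i j)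
  have e2 : ∑ ρ : Equiv.Perm (Fin k), (Fw z (t ∘ ρ) g * Pij z (t ∘ ρ) (g i) (g j) i j +
    Fw z (t ∘ (ρ * Equiv.swap i j)) g * Pij z (t ∘ (ρ * Equiv.swap i j)) (g i) (g j) i j) = 0 := by
    apply Finset.sum_eq_zero
    intro ρ _
    exact pair_anti z (t ∘ ρ) g (fun i s => h _ s) (hi.comp ρ.injective) i j hij
  rw [Finset.sum_add_distrib] at e2
  simp only [Equiv.coe_mulRight, Equiv.Perm.coe_mul] at e e2
  rw [e] at e2
  simpa using e2

theorem bethe_shift {n : ℕ} (m : Fin n → ℕ) (z : Fin n → ℂ) {k : ℕ} (t : Fin k → ℂ) (l l' : Idx m)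
    (g : Fin k → Fin n) (hg : ∀ p, cnt g p = l p) (a b : Fin n)
    (hl : ∀ q, (l' q : ℕ) + (if q = b then 1 else 0) = l q + (if q = a then 1 else 0)) :
    ((l b : ℕ) : ℂ) * betheVec m z t l' =
      ∑ i ∈ Finset.univ.filter (fun i => g i = b), Phi z t (Function.update g i a) := by
  rw [← hg b, cnt, ← nsmul_eq_mul, ← Finset.sum_const]
  apply Finset.sum_congr rfl
  intro i hi
  have hib : g i = b := by simpa using hi
  have hc : ∀ q, cnt (Function.update g i a) q = l' q := by
    intro q
    have h1 := cnt_update g i a q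
    have h2 := hl q
    rw [hib, hg q] at h1
    omega
  have hs : ∑ s, (l' s : ℕ) = k := by
    rw [← sum_cnt (Function.update g i a)]
    exact Finset.sum_congr rfl (fun p _ => (hc p).symm)
  rw [betheVec, if_pos hs, omega_eq_Phi m z t l' _ hc]

theorem om12_apply {n : ℕ} (m : Fin n → ℕ) (z : Fin n → ℂ) {k : ℕ} (t : Fin k → ℂ) (l : Idx m)
    (g : Fin k → Fin n) (hg : ∀ p, cnt g p = l p) (a b : Fin n) (hab : a ≠ b) :
    Om12 m a b (betheVec m z t) l = ((m a : ℂ) - ((l a : ℕ) : ℂ)) *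
      ∑ i ∈ Finset.univ.filter (fun i => g i = b), Phi z t (Function.update g i a) := by
  simp only [Om12, Module.End.mul_apply, E12, E21, mulShift, LinearMap.coe_mk, AddHom.coe_mk,
    Function.update_of_ne hab.symm]
  by_cases h1 : (l a : ℕ) = m a
  · simp [h1]
  by_cases h2 : l b = 0
  · have : Finset.univ.filter (fun i => g i = b) = ∅ := by
      rw [← Finset.card_eq_zero]
      have := hg b
      rw [h2] at this
      simpa [cnt] using this
    simp [h2, this]
  congr 1
  apply bethe_shift m z t l _ g hg a b
  intro q
  have hlt : (l a : ℕ) < m a := lt_of_le_of_ne (Nat.lt_succ_iff.1 (l a).2) h1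
  have hv1 : ((l a + 1 : Fin (m a + 1)) : ℕ) = l a + 1 :=
    Fin.val_add_one_of_lt (by rw [Fin.lt_def]; simpa using hlt)
  have hv2 : ((l b - 1 : Fin (m b + 1)) : ℕ) = l b - 1 := Fin.val_sub_one_of_ne_zero h2
  have hv3 : (l b : ℕ) ≠ 0 := fun e => h2 (Fin.ext e)
  by_cases hqb : q = b
  · subst hqb
    rw [Function.update_self, hv2, if_pos rfl, if_neg hab.symm]
    omega
  · rw [Function.update_of_ne hqb, if_neg hqb]
    by_cases hqa : q = a
    · subst hqa
      rw [Function.update_self, hv1, if_pos rfl]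
    · rw [Function.update_of_ne hqa, if_neg hqa]

theorem om21_apply {n : ℕ} (m : Fin n → ℕ) (v : TV m) (a b : Fin n) (hab : a ≠ b) :
    Om21 m a b v = Om12 m b a v := by
  funext l
  simp only [Om12, Om21, Module.End.mul_apply, E12, E21, mulShift, LinearMap.coe_mk, AddHom.coe_mk,
    Function.update_of_ne hab.symm, Function.update_of_ne hab]
  rw [Function.update_comm hab]
  ring

/-- The coefficient in front of `Fw z τ g`. -/
def Coef {n k : ℕ} (m : Fin n → ℕ) (z : Fin n → ℂ) (μ : ℂ) (τ : Fin k → ℂ) (g : Fin k → Fin n)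
    (s : Fin n) : ℂ :=
  μ / 2 * (m s - 2 * cnt g s) + ∑ p ∈ Finset.univ.erase s,
    ((z s + z p) / (z s - z p) * ((m s - 2 * cnt g s) * (m p - 2 * cnt g p) / 4)
      + (m s - cnt g s) * ∑ i ∈ Finset.univ.filter (fun i => g i = p),
          (z s / (z s - z p) + z s / (τ i - z s))
      + (m p - cnt g p) * ∑ i ∈ Finset.univ.filter (fun i => g i = s),
          (z p / (z s - z p) - z p / (τ i - z p)))

theorem skew_sum {k : ℕ} (τ : Fin k → ℂ) (hi : Function.Injective τ) (S : Finset (Fin k)) :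
    ∑ i ∈ S, ∑ j ∈ S.erase i, 2 * τ i / (τ i - τ j) = (#S : ℂ) * (#S - 1) := by
  have h1 : ∑ i ∈ S, ∑ j ∈ S.erase i, 2 * τ i / (τ i - τ j)
      = ∑ i ∈ S, ∑ j ∈ S, if i = j then 0 else 2 * τ i / (τ i - τ j) := by
    apply Finset.sum_congr rfl
    intro i hiS
    rw [← Finset.add_sum_erase S _ hiS, if_pos rfl, zero_add]
    apply Finset.sum_congr rfl
    intro j hj
    rw [if_neg (Finset.ne_of_mem_erase hj).symm]
  have h2 : ∑ i ∈ S, ∑ j ∈ S, (if i = j then 0 else 2 * τ i / (τ i - τ j))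
      = ∑ i ∈ S, ∑ j ∈ S, (if i = j then 0 else 2 * τ j / (τ j - τ i)) := by
    rw [Finset.sum_comm]
    simp only [eq_comm]
  have h3 : ∑ i ∈ S, ∑ j ∈ S, (if i = j then 0 else 2 * τ i / (τ i - τ j))
      + ∑ i ∈ S, ∑ j ∈ S, (if i = j then 0 else 2 * τ j / (τ j - τ i))
      = 2 * ((#S : ℂ) * (#S - 1)) := by
    have h4 : ∀ i ∈ S, ∑ j ∈ S, ((if i = j then 0 else 2 * τ i / (τ i - τ j))
        + (if i = j then 0 else 2 * τ j / (τ j - τ i))) = 2 * ((#S : ℂ) - 1) := by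
      intro i hiS
      have : ∀ j ∈ S, ((if i = j then 0 else 2 * τ i / (τ i - τ j))
        + (if i = j then 0 else 2 * τ j / (τ j - τ i))) = 2 - if i = j then 2 else 0 := by
        intro j _
        by_cases hij : i = j
        · simp [hij]
        · simp only [if_neg hij]
          have h5 : τ i - τ j ≠ 0 := sub_ne_zero.2 (fun e => hij (hi e))
          rw [← neg_sub (τ i) (τ j), div_neg]
          field_simp
          ring
      rw [Finset.sum_congr rfl this, Finset.sum_sub_distrib, Finset.sum_ite_eq, if_pos hiS]
      simp
      ring
    rw [← Finset.sum_add_distrib]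
    rw [Finset.sum_congr rfl (fun i hiS => by rw [← Finset.sum_add_distrib, h4 i hiS])]
    simp
    ring
  rw [h1]
  rw [← h2] at h3
  linear_combination h3 / 2

theorem coef_eq {n k : ℕ} (m : Fin n → ℕ) (z : Fin n → ℂ) (hz : Function.Injective z) (μ : ℂ)
    (τ : Fin k → ℂ) (hτ : BAE m z μ τ) (g : Fin k → Fin n) (s : Fin n) :
    Coef m z μ τ g s = kEig m z μ τ s +
      ∑ i ∈ Finset.univ.filter (fun i => g i = s), ∑ j ∈ Finset.univ.filter (fun j => g j ≠ s),
        Pij z τ (g i) (g j) i j := by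
  obtain ⟨hinj, h0, hne, hB⟩ := hτ
  set S := Finset.univ.filter (fun i => g i = s) with hS
  set T := Finset.univ.filter (fun i => g i ≠ s) with hT
  set Y := ∑ j ∈ T, z s / (τ j - z s) with hY
  set R : Fin n → ℂ := fun p => ∑ i ∈ S, z p / (τ i - z p) with hR
  set Q := ∑ i ∈ S, ∑ j ∈ T, 2 * τ i / (τ i - τ j) with hQ
  have hcS : (#S : ℂ) = cnt g s := rfl
  -- sums over the complement, fibrewise
  have fib : ∀ f : Fin k → ℂ, ∑ j ∈ T, f j =
      ∑ p ∈ Finset.univ.erase s, ∑ j ∈ Finset.univ.filter (fun i => g i = p), f j := by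
    intro f
    rw [← Finset.sum_fiberwise_of_maps_to (s := T) (t := Finset.univ.erase s) (g := g)
      (by intro x hx; simpa [hT] using hx)]
    apply Finset.sum_congr rfl
    intro p hp
    apply Finset.sum_congr _ (fun _ _ => rfl)
    ext x
    simp only [hT, Finset.mem_filter, Finset.mem_univ, true_and]
    constructor
    · exact fun h => h.2
    · exact fun h => ⟨h ▸ Finset.ne_of_mem_erase hp, h⟩
  have hk : (k : ℂ) = cnt g s + ∑ p ∈ Finset.univ.erase s, (cnt g p : ℂ) := by
    rw [Finset.add_sum_erase _ (fun p => (cnt g p : ℂ)) (Finset.mem_univ s)]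
    exact_mod_cast (sum_cnt g).symm
  have hcT : (#T : ℂ) = ∑ p ∈ Finset.univ.erase s, (cnt g p : ℂ) := by
    have := fib (fun _ => 1)
    simpa [cnt] using this
  have hM : ∑ u, (m u : ℂ) = m s + ∑ p ∈ Finset.univ.erase s, (m p : ℂ) :=
    (Finset.add_sum_erase _ (fun p => (m p : ℂ)) (Finset.mem_univ s)).symm
  have split : ∀ f : Fin k → ℂ, ∑ i, f i = ∑ i ∈ S, f i + ∑ i ∈ T, f i := fun f =>
    (Finset.sum_filter_add_sum_filter_not _ _ _).symm
  -- the summed Bethe equations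
  have hBs : (cnt g s : ℂ) * (1 - μ + ((∑ u, (m u : ℂ)) - 2 * (k : ℂ)) / 2)
      + cnt g s * (cnt g s - 1) + Q - cnt g s * (∑ u, (m u : ℂ)) - m s * R s
      - ∑ p ∈ Finset.univ.erase s, m p * R p = 0 := by
    have e1 : ∀ i ∈ S, (1 - μ + ((∑ u, (m u : ℂ)) - 2 * (k : ℂ)) / 2)
        + (∑ j ∈ S.erase i, 2 * τ i / (τ i - τ j) + ∑ j ∈ T, 2 * τ i / (τ i - τ j))
        - (∑ u, (m u : ℂ)) - ∑ u, m u * (z u / (τ i - z u)) = 0 := by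
      intro i hiS
      have hd : Finset.univ.erase i = (S.erase i) ∪ T := by
        ext x
        have hgi : g i = s := by simpa [hS] using hiS
        simp only [hS, hT, Finset.mem_erase, Finset.mem_univ, and_true, Finset.mem_union,
          Finset.mem_filter, true_and]
        constructor
        · intro hx
          by_cases hgx : g x = s
          · exact Or.inl ⟨hx, hgx⟩
          · exact Or.inr hgx
        · rintro (h | h)
          · exact h.1
          · rintro rfl; exact h hgi
      have hdis : Disjoint (S.erase i) T := by
        rw [Finset.disjoint_left]
        intro x hx hx2
        simp only [hS, hT, Finset.mem_erase, Finset.mem_filter, Finset.mem_univ, true_and]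
          at hx hx2
        exact hx2 hx.2
      have := hB i
      rw [hd, Finset.sum_union hdis] at this
      have hm1 : ∑ u, (m u : ℂ) + ∑ u, m u * (z u / (τ i - z u))
          = τ i * ∑ u, (m u : ℂ) / (τ i - z u) := by
        rw [← Finset.sum_add_distrib, Finset.mul_sum]
        apply Finset.sum_congr rfl
        intro u _
        have := sub_ne_zero.2 (hne i u)
        field_simp
        ring
      have hm2 : ∀ U : Finset (Fin k), ∑ j ∈ U, 2 * τ i / (τ i - τ j)
          = τ i * ∑ j ∈ U, 2 / (τ i - τ j) := by
        intro U
        rw [Finset.mul_sum]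
        apply Finset.sum_congr rfl
        intro u _
        ring
      rw [hm2, hm2, sub_sub, hm1]
      have hti := h0 i
      have e2 : τ i * ((1 - μ + ((∑ u, (m u : ℂ)) - 2 * (k : ℂ)) / 2) / τ i)
        = (1 - μ + ((∑ u, (m u : ℂ)) - 2 * (k : ℂ)) / 2) := mul_div_cancel₀ _ hti
      linear_combination τ i * this - e2
    have e3 := Finset.sum_eq_zero e1
    simp only [Finset.sum_sub_distrib, Finset.sum_add_distrib, Finset.sum_const, nsmul_eq_mul,
      hcS] at e3
    rw [skew_sum τ hinj S, hcS] at e3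
    have e4 : ∑ i ∈ S, ∑ u, m u * (z u / (τ i - z u)) = m s * R s
      + ∑ p ∈ Finset.univ.erase s, m p * R p := by
      rw [Finset.sum_comm, Finset.add_sum_erase _ (fun p => m p * R p) (Finset.mem_univ s)]
      apply Finset.sum_congr rfl
      intro u _
      rw [hR, Finset.mul_sum]
    rw [e4] at e3
    linear_combination e3
  -- the pair terms
  have hP : ∑ i ∈ S, ∑ j ∈ T, Pij z τ (g i) (g j) i j
      = - cnt g s * Y + ∑ p ∈ Finset.univ.erase s, cnt g p * R p - Q
        + cnt g s * ∑ p ∈ Finset.univ.erase s, (cnt g p : ℂ) := by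
    have e1 : ∀ i ∈ S, ∑ j ∈ T, Pij z τ (g i) (g j) i j
      = - Y + ∑ p ∈ Finset.univ.erase s, cnt g p * (z p / (τ i - z p))
        - ∑ j ∈ T, 2 * τ i / (τ i - τ j) + ∑ p ∈ Finset.univ.erase s, (cnt g p : ℂ) := by
      intro i hiS
      have hgi : g i = s := by simpa [hS] using hiS
      simp only [Pij, hgi, Finset.sum_sub_distrib, Finset.sum_add_distrib, Finset.sum_neg_distrib]
      rw [← hcT, fib (fun j => z (g j) / (τ i - z (g j)))]
      have e2 : ∑ p ∈ Finset.univ.erase s, ∑ j ∈ Finset.univ.filter (fun i => g i = p),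
          z (g j) / (τ i - z (g j)) = ∑ p ∈ Finset.univ.erase s, cnt g p * (z p / (τ i - z p)) := by
        apply Finset.sum_congr rfl
        intro p _
        rw [Finset.sum_congr rfl (g := fun _ => z p / (τ i - z p))]
        · simp [cnt]
        · intro j hj
          have : g j = p := by simpa using hj
          rw [this]
      rw [e2]
      simp
      exact hY.symm
    rw [Finset.sum_congr rfl e1]
    simp only [Finset.sum_sub_distrib, Finset.sum_add_distrib, Finset.sum_const, nsmul_eq_mul,
      hcS]
    have e4 : ∑ i ∈ S, ∑ p ∈ Finset.univ.erase s, cnt g p * (z p / (τ i - z p)) =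
      ∑ p ∈ Finset.univ.erase s, cnt g p * R p := by
      rw [Finset.sum_comm]
      apply Finset.sum_congr rfl
      intro u _
      rw [hR, Finset.mul_sum]
    rw [e4]
    ring
  have hC : Coef m z μ τ g s = μ / 2 * (m s - 2 * cnt g s) + (m s - cnt g s) * Y
      + ∑ p ∈ Finset.univ.erase s, (m s / 2 * (m p * z s / (z s - z p)) - m s / 4 * m p
        - cnt g s / 2 * m p + m s / 2 * cnt g p - m p * R p + cnt g p * R p) := by
    rw [hY, fib, Coef, Finset.mul_sum, add_assoc, ← Finset.sum_add_distrib]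
    congr 1
    apply Finset.sum_congr rfl
    intro p hp
    have hps : z s - z p ≠ 0 :=
      sub_ne_zero.2 (fun e => Finset.ne_of_mem_erase hp (hz e).symm)
    rw [Finset.sum_add_distrib, Finset.sum_sub_distrib]
    simp only [Finset.sum_const, nsmul_eq_mul]
    change _ + _ * ((cnt g p : ℂ) * _ + _) + _ * ((cnt g s : ℂ) * _ - R p) = _
    generalize ∑ x ∈ Finset.univ.filter (fun i => g i = p), z s / (τ x - z s) = W
    generalize R p = V
    field_simp
    ring
  rw [hC, hP, kEig, split]
  change _ = _ * (_ + 2 * (R s + Y)) + _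
  simp only [Finset.sum_sub_distrib, Finset.sum_add_distrib, ← Finset.mul_sum]
  rw [hk, hM] at hBs
  rw [hk, hM]
  linear_combination hBs

theorem om12_zero {n : ℕ} (m : Fin n → ℕ) (z : Fin n → ℂ) {k : ℕ} (t : Fin k → ℂ) (l : Idx m)
    (hs : ∑ u, (l u : ℕ) ≠ k) (a b : Fin n) (hab : a ≠ b) :
    Om12 m a b (betheVec m z t) l = 0 := by
  obtain ⟨g, hg⟩ := exists_cnt (k := ∑ u, (l u : ℕ)) (fun u => (l u : ℕ)) rfl
  simp only [Om12, Module.End.mul_apply, E12, E21, mulShift, LinearMap.coe_mk, AddHom.coe_mk,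
    Function.update_of_ne hab.symm]
  by_cases h1 : (l a : ℕ) = m a
  · simp [h1]
  by_cases h2 : l b = 0
  · simp [h2]
  have hlt : (l a : ℕ) < m a := lt_of_le_of_ne (Nat.lt_succ_iff.1 (l a).2) h1
  have hv1 : ((l a + 1 : Fin (m a + 1)) : ℕ) = l a + 1 :=
    Fin.val_add_one_of_lt (by rw [Fin.lt_def]; simpa using hlt)
  have hv2 : ((l b - 1 : Fin (m b + 1)) : ℕ) = l b - 1 := Fin.val_sub_one_of_ne_zero h2
  have hv3 : (l b : ℕ) ≠ 0 := fun e => h2 (Fin.ext e)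
  have hq : ∀ q, ((Function.update (Function.update l a (l a + 1)) b (l b - 1)) q : ℕ)
      + (if q = b then 1 else 0) = l q + (if q = a then 1 else 0) := by
    intro q
    by_cases hqb : q = b
    · subst hqb
      rw [Function.update_self, hv2, if_pos rfl, if_neg hab.symm]
      omega
    · rw [Function.update_of_ne hqb, if_neg hqb]
      by_cases hqa : q = a
      · subst hqa
        rw [Function.update_self, hv1, if_pos rfl]
      · rw [Function.update_of_ne hqa, if_neg hqa]
  have hsum := Finset.sum_congr (s₁ := Finset.univ) rfl (fun q _ => hq q)
  rw [Finset.sum_add_distrib, Finset.sum_add_distrib] at hsum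
  simp only [Finset.sum_ite_eq', Finset.mem_univ, if_true, Nat.add_right_cancel_iff] at hsum
  rw [betheVec, if_neg (by rw [hsum]; exact hs)]
  simp

theorem Kop_eval {n : ℕ} (m : Fin n → ℕ) (z : Fin n → ℂ) (μ : ℂ) (s : Fin n) (v : TV m)
    (l : Idx m) :
    Kop m z μ s v l = μ / 2 * (m s - 2 * (l s : ℕ)) * v l + ∑ p ∈ Finset.univ.erase s,
      (z s / z p - 1)⁻¹ * (z s / z p * ((m s - 2 * (l s : ℕ)) * (m p - 2 * (l p : ℕ)) / 4 * v l
          + Om12 m s p v l)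
        + ((m s - 2 * (l s : ℕ)) * (m p - 2 * (l p : ℕ)) / 4 * v l + Om12 m p s v l)) := by
  simp only [Kop, LinearMap.add_apply, LinearMap.smul_apply, LinearMap.sum_apply, Pi.add_apply,
    Pi.smul_apply, Finset.sum_apply, smul_eq_mul, LinearMap.sub_apply, Pi.sub_apply]
  congr 1
  · simp only [E11, E22, mulShift, LinearMap.coe_mk, AddHom.coe_mk, id]
    ring
  · apply Finset.sum_congr rfl
    intro p hp
    have hps := Finset.ne_of_mem_erase hp
    simp only [rOp, LinearMap.add_apply, LinearMap.smul_apply, Pi.add_apply,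
      Pi.smul_apply, smul_eq_mul]
    rw [om21_apply m v s p hps.symm]
    have : Om0 m s p v l = (m s - 2 * (l s : ℕ)) * (m p - 2 * (l p : ℕ)) / 2 * v l := by
      simp only [Om0, E11, E22, mulShift, LinearMap.coe_mk, AddHom.coe_mk, id,
        LinearMap.add_apply, Module.End.mul_apply, Pi.add_apply]
      ring
    rw [this]
    ring

theorem Kop_apply_zero {n : ℕ} (m : Fin n → ℕ) (z : Fin n → ℂ) (μ : ℂ) {k : ℕ} (t : Fin k → ℂ)
    (s : Fin n) (l : Idx m) (hs : ¬ ∑ u, (l u : ℕ) = k) :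
    Kop m z μ s (betheVec m z t) l = (kEig m z μ t s • betheVec m z t) l := by
  have hv : betheVec m z t l = 0 := by rw [betheVec, if_neg hs]
  rw [Kop_eval, Pi.smul_apply, hv, Finset.sum_eq_zero]
  · simp
  · intro p hp
    have hps := Finset.ne_of_mem_erase hp
    rw [om12_zero m z t l hs s p hps.symm, om12_zero m z t l hs p s hps]
    simp

theorem BAE_perm {n k : ℕ} (m : Fin n → ℕ) (z : Fin n → ℂ) (μ : ℂ) (t : Fin k → ℂ)
    (ht : BAE m z μ t) (ρ : Equiv.Perm (Fin k)) : BAE m z μ (t ∘ ρ) := by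
  obtain ⟨h1, h2, h3, h4⟩ := ht
  refine ⟨h1.comp ρ.injective, fun i => h2 _, fun i s => h3 _ s, fun i => ?_⟩
  have := h4 (ρ i)
  have e : ∑ j ∈ Finset.univ.erase i, 2 / ((t ∘ ρ) i - (t ∘ ρ) j)
      = ∑ j ∈ Finset.univ.erase (ρ i), 2 / (t (ρ i) - t j) := by
    apply Finset.sum_equiv ρ
    · intro j; simp
    · intro j _; rfl
  rw [e]
  exact this

theorem kEig_perm {n k : ℕ} (m : Fin n → ℕ) (z : Fin n → ℂ) (μ : ℂ) (t : Fin k → ℂ)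
    (ρ : Equiv.Perm (Fin k)) (s : Fin n) : kEig m z μ (t ∘ ρ) s = kEig m z μ t s := by
  unfold kEig
  rw [← Equiv.sum_comp ρ (fun i => z s / (t i - z s))]
  rfl

theorem Kop_apply {n : ℕ} (m : Fin n → ℕ) (z : Fin n → ℂ) (hz0 : ∀ s, z s ≠ 0)
    (hz : Function.Injective z) (μ : ℂ) {k : ℕ} (t : Fin k → ℂ) (ht : BAE m z μ t)
    (s : Fin n) (l : Idx m) (g : Fin k → Fin n) (hg : ∀ p, cnt g p = l p) :
    Kop m z μ s (betheVec m z t) l = (kEig m z μ t s • betheVec m z t) l := by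
  have hs : ∑ s, (l s : ℕ) = k := by
    rw [← sum_cnt g]; exact Finset.sum_congr rfl (fun p _ => (hg p).symm)
  have hv : betheVec m z t l = ∑ ρ : Equiv.Perm (Fin k), Fw z (t ∘ ρ) g := by
    rw [betheVec, if_pos hs, omega_eq_Phi m z t l g hg, Phi]
  have hsum : Kop m z μ s (betheVec m z t) l
      = ∑ ρ : Equiv.Perm (Fin k), Fw z (t ∘ ρ) g * Coef m z μ (t ∘ ρ) g s := by
    rw [Kop_eval, hv]
    have sw : ∀ (c : ℂ) (f : Equiv.Perm (Fin k) → Fin n → ℂ),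
        ∑ ρ : Equiv.Perm (Fin k), Fw z (t ∘ ρ) g * (c + ∑ p ∈ Finset.univ.erase s, f ρ p)
        = c * (∑ ρ : Equiv.Perm (Fin k), Fw z (t ∘ ρ) g)
          + ∑ p ∈ Finset.univ.erase s, ∑ ρ : Equiv.Perm (Fin k), Fw z (t ∘ ρ) g * f ρ p := by
      intro c f
      rw [Finset.sum_comm, Finset.mul_sum, ← Finset.sum_add_distrib]
      apply Finset.sum_congr rfl
      intro ρ _
      rw [← Finset.mul_sum]
      ring
    simp only [Coef]
    rw [sw]
    congr 1
    · rw [hg]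
    · apply Finset.sum_congr rfl
      intro p hp
      have hps := Finset.ne_of_mem_erase hp
      have hzz : z s - z p ≠ 0 := sub_ne_zero.2 (fun e => hps (hz e).symm)
      have hp0 := hz0 p
      have hx : (z s / z p - 1)⁻¹ = z p / (z s - z p) := by
        field_simp
      rw [om12_apply m z t l g hg s p hps.symm, om12_apply m z t l g hg p s hps, hx]
      have e1 : z s / (z s - z p) * ∑ i ∈ Finset.univ.filter (fun i => g i = p),
          Phi z t (Function.update g i s) = ∑ ρ : Equiv.Perm (Fin k), Fw z (t ∘ ρ) g *
            ∑ i ∈ Finset.univ.filter (fun i => g i = p),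
              (z s / (z s - z p) + z s / ((t ∘ ρ) i - z s)) := by
        simp only [Phi, Finset.mul_sum]
        rw [Finset.sum_comm]
        apply Finset.sum_congr rfl
        intro ρ _
        apply Finset.sum_congr rfl
        intro i hi
        have hgi : g i = p := by simpa using hi
        have hne := sub_ne_zero.2 (ht.2.2.1 (ρ i) s)
        rw [Fw_update z (t ∘ ρ) g (fun i s => ht.2.2.1 _ s), hgi]
        simp only [Function.comp_apply]
        field_simp
        ring
      have e2 : z p / (z s - z p) * ∑ i ∈ Finset.univ.filter (fun i => g i = s),
          Phi z t (Function.update g i p) = ∑ ρ : Equiv.Perm (Fin k), Fw z (t ∘ ρ) g *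
            ∑ i ∈ Finset.univ.filter (fun i => g i = s),
              (z p / (z s - z p) - z p / ((t ∘ ρ) i - z p)) := by
        simp only [Phi, Finset.mul_sum]
        rw [Finset.sum_comm]
        apply Finset.sum_congr rfl
        intro ρ _
        apply Finset.sum_congr rfl
        intro i hi
        have hgi : g i = s := by simpa using hi
        have hne := sub_ne_zero.2 (ht.2.2.1 (ρ i) p)
        rw [Fw_update z (t ∘ ρ) g (fun i s => ht.2.2.1 _ s), hgi]
        simp only [Function.comp_apply]
        field_simp
        ring
      have hx2 : z p / (z s - z p) * (z s / z p) = z s / (z s - z p) := by field_simp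
      have e3 : ∀ (c : ℂ) (f : Equiv.Perm (Fin k) → ℂ), ∑ ρ : Equiv.Perm (Fin k),
          Fw z (t ∘ ρ) g * (c * f ρ) = c * ∑ ρ : Equiv.Perm (Fin k), Fw z (t ∘ ρ) g * f ρ := by
        intro c f
        rw [Finset.mul_sum]
        exact Finset.sum_congr rfl (fun _ _ => by ring)
      simp only [mul_add (Fw z _ g), Finset.sum_add_distrib (s := (Finset.univ : Finset (Equiv.Perm (Fin k)))), ← Finset.sum_mul]
      rw [e3, e3, ← e1, ← e2, hg, hg]
      generalize ∑ i ∈ Finset.univ.filter (fun i => g i = s), Phi z t (Function.update g i p) = A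
      generalize ∑ i ∈ Finset.univ.filter (fun i => g i = p), Phi z t (Function.update g i s) = B
      generalize ∑ ρ : Equiv.Perm (Fin k), Fw z (t ∘ ρ) g = C
      field_simp
      ring
  rw [hsum, Pi.smul_apply, smul_eq_mul, hv]
  have hstep : ∀ ρ : Equiv.Perm (Fin k), Fw z (t ∘ ρ) g * Coef m z μ (t ∘ ρ) g s
      = kEig m z μ t s * Fw z (t ∘ ρ) g + ∑ i ∈ Finset.univ.filter (fun i => g i = s),
        ∑ j ∈ Finset.univ.filter (fun j => g j ≠ s),
          Fw z (t ∘ ρ) g * Pij z (t ∘ ρ) (g i) (g j) i j := by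
    intro ρ
    rw [coef_eq m z hz μ (t ∘ ρ) (BAE_perm m z μ t ht ρ) g s, kEig_perm]
    simp only [← Finset.mul_sum]
    ring
  rw [Finset.sum_congr rfl (fun ρ _ => hstep ρ), Finset.sum_add_distrib, ← Finset.mul_sum,
    Finset.sum_comm]
  rw [add_eq_left]
  apply Finset.sum_eq_zero
  intro i hi
  rw [Finset.sum_comm]
  apply Finset.sum_eq_zero
  intro j hj
  refine pair_sum z t g ht.2.2.1 ht.1 i j ?_
  rintro rfl
  simp only [Finset.mem_filter, Finset.mem_univ, true_and] at hi hj
  exact hj hi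

/-- Theorem 5.3 of the paper.  If `t⁰` is a solution of the Bethe ansatz
equations for `(z; μ; V[ν])`, `ν = M - 2m'`, then for each `s` the Bethe vector is an
eigenvector of the trigonometric Gaudin operator:
`K_s(z,μ) ω(t⁰,z) = k_s(t⁰,z,μ) ω(t⁰,z)` with
`k_s = (m_s/2)[(μ - ν/2 + m_s/2) + Σ_{p≠s} m_p z_s/(z_s - z_p) + 2Σ_i z_s/(t⁰_i - z_s)]`. -/
theorem statement5
    (n : ℕ) (hn : 1 < n) (m : Fin n → ℕ) (hm : ∀ s, 0 < m s)
    (M : ℕ) (hM : M = ∑ s, m s)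
    (z : Fin n → ℂ) (hz0 : ∀ s, z s ≠ 0) (hz : Function.Injective z)
    (μ : ℂ) (m' : ℕ) (ν : ℤ) (hν : ν = (M : ℤ) - 2 * (m' : ℤ))
    (t : Fin m' → ℂ) (ht : BAE m z μ t) :
    ∀ s : Fin n, Kop m z μ s (betheVec m z t) = kEig m z μ t s • betheVec m z t := by
  intro s
  funext l
  by_cases hs : ∑ u, (l u : ℕ) = m'
  · obtain ⟨g, hg⟩ := exists_cnt (fun u => (l u : ℕ)) hs
    exact Kop_apply m z hz0 hz μ t ht s l g hg
  · exact Kop_apply_zero m z μ t s l hs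


end
end Paper
end
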